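/- arXiv:2207.01632 — 2 statements merged into one kernel-verified Lean document; each statement's English description precedes it below -/
import Mathlib

section
/- Every almost pseudoreflexive polytope is canonical: if ∇ is a lattice polytope with 0 in its interior such that the origin is an interior point of [∇*], then the origin is the unique interior lattice point of ∇. -/
open Set

/-- A lattice point of `ℤ^d ⊆ ℝ^d`. -/
def IsLatticePoint {d : ℕ} (x : Fin d → ℝ) : Prop := ∀ i, ∃ n : ℤ, x i = (n : ℝ)

/-- A lattice polytope: the convex hull of finitely many lattice points. -/
def IsLatticePolytope {d : ℕ} (P : Set (Fin d → ℝ)) : Prop :=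
  ∃ S : Finset (Fin d → ℝ), (∀ x ∈ S, IsLatticePoint x) ∧ P = convexHull ℝ (S : Set (Fin d → ℝ))

/-- The polar dual `P* = {u | ⟨u,v⟩ ≥ -1 for all v ∈ P}`. -/
def polarDual {d : ℕ} (P : Set (Fin d → ℝ)) : Set (Fin d → ℝ) :=
  {u | ∀ v ∈ P, (-1 : ℝ) ≤ ∑ i, u i * v i}

/-- `[P]`: the convex hull of the lattice points of `P`. -/
def latticeHull {d : ℕ} (P : Set (Fin d → ℝ)) : Set (Fin d → ℝ) :=
  convexHull ℝ {x ∈ P | IsLatticePoint x}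

/-- A primitive lattice point. -/
def IsPrimitivePt {d : ℕ} (x : Fin d → ℝ) : Prop :=
  IsLatticePoint x ∧ x ≠ 0 ∧
    ∀ (n : ℕ) (u : Fin d → ℝ), IsLatticePoint u → x = n • u → n = 1

/-- A Fano polytope: a lattice polytope with the origin as interior point,
all of whose vertices are primitive lattice points. -/
def IsFanoPolytope {d : ℕ} (P : Set (Fin d → ℝ)) : Prop :=
  IsLatticePolytope P ∧ 0 ∈ interior P ∧ ∀ v ∈ Set.extremePoints ℝ P, IsPrimitivePt v

/-- Canonical: the origin is the unique interior lattice point. -/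
def IsCanonical {d : ℕ} (P : Set (Fin d → ℝ)) : Prop :=
  ∀ x ∈ interior P, IsLatticePoint x → x = 0

/-- Terminal: the lattice points are exactly the vertices together with the origin. -/
def IsTerminal {d : ℕ} (P : Set (Fin d → ℝ)) : Prop :=
  {x ∈ P | IsLatticePoint x} = Set.extremePoints ℝ P ∪ {0}

/-!
Let `x` be an interior lattice point of `P`. A lattice point `u` of `P*` satisfies `⟨u, x⟩ > -1`,
strictly since `x` is interior, so integrality gives `⟨u, x⟩ ≥ 0`. Hence `[P*]` is contained in
`{w | ⟨w, x⟩ ≥ 0}`. If `x ≠ 0`, this is a half-space with the origin on its boundary, so the origin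
cannot be interior to `[P*]`.
-/

section DotProduct

variable {ι 𝕜 : Type*} [Fintype ι] [Field 𝕜] [TopologicalSpace 𝕜]

lemma isOpenMap_dotProduct_left [IsTopologicalRing 𝕜] {u : ι → 𝕜} (hu : u ≠ 0) :
    IsOpenMap (u ⬝ᵥ ·) := by
  let f : StrongDual 𝕜 (ι → 𝕜) := ⟨dotProductBilin 𝕜 𝕜 u, by
    change Continuous fun v => u ⬝ᵥ v
    fun_prop⟩
  refine f.isOpenMap_of_ne_zero fun hf => hu ?_
  exact dotProduct_eq_zero u fun v => DFunLike.congr_fun hf v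

lemma lt_dotProduct_of_mem_interior [LinearOrder 𝕜] [IsStrictOrderedRing 𝕜] [OrderTopology 𝕜]
    {s : Set (ι → 𝕜)} {u x : ι → 𝕜} {c : 𝕜} (hu : u ≠ 0) (hs : ∀ v ∈ s, c ≤ u ⬝ᵥ v)
    (hx : x ∈ interior s) : c < u ⬝ᵥ x := by
  have hmem : u ⬝ᵥ x ∈ interior (Ici c) := (isOpenMap_dotProduct_left hu).mapsTo_interior hs hx
  rwa [interior_Ici] at hmem

end DotProduct

section PolarDual

variable {d : ℕ} {P : Set (Fin d → ℝ)} {u x : Fin d → ℝ}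

lemma IsLatticePoint.exists_dotProduct_eq_intCast (hu : IsLatticePoint u) (hx : IsLatticePoint x) :
    ∃ n : ℤ, u ⬝ᵥ x = n := by
  choose m hm using hu
  choose n hn using hx
  exact ⟨m ⬝ᵥ n, by simp only [dotProduct, hm, hn, Int.cast_sum, Int.cast_mul]⟩

lemma neg_one_lt_dotProduct_of_mem_polarDual (hu : u ∈ polarDual P) (hx : x ∈ interior P) :
    -1 < u ⬝ᵥ x := by
  obtain rfl | hu0 := eq_or_ne u 0
  · simp
  · exact lt_dotProduct_of_mem_interior hu0 hu hx

lemma dotProduct_nonneg_of_mem_polarDual (hu : u ∈ polarDual P) (huL : IsLatticePoint u)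
    (hx : x ∈ interior P) (hxL : IsLatticePoint x) : 0 ≤ u ⬝ᵥ x := by
  have hlt := neg_one_lt_dotProduct_of_mem_polarDual hu hx
  obtain ⟨n, hn⟩ := huL.exists_dotProduct_eq_intCast hxL
  rw [hn] at hlt ⊢
  have hn_gt : -1 < n := by exact_mod_cast hlt
  exact_mod_cast Int.add_one_le_of_lt hn_gt

lemma dotProduct_nonneg_of_mem_latticeHull_polarDual (hu : u ∈ latticeHull (polarDual P))
    (hx : x ∈ interior P) (hxL : IsLatticePoint x) : 0 ≤ x ⬝ᵥ u := by
  have hconvex : Convex ℝ {w | 0 ≤ x ⬝ᵥ w} :=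
    convex_halfSpace_ge (dotProductBilin ℝ ℝ x).isLinear 0
  refine convexHull_min (fun w hw => ?_) hconvex hu
  rw [mem_ofPred_eq, dotProduct_comm]
  exact dotProduct_nonneg_of_mem_polarDual hw.1 hw.2 hx hxL

theorem almost_pseudoreflexive_canonical_general
    (hapr : 0 ∈ interior (latticeHull (polarDual P))) : IsCanonical P := by
  intro x hx hxL
  by_contra hx0
  have hpos : 0 < x ⬝ᵥ 0 := lt_dotProduct_of_mem_interior hx0
    (fun _ hu => dotProduct_nonneg_of_mem_latticeHull_polarDual hu hx hxL) hapr
  simp at hpos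

end PolarDual

/-- Every almost pseudoreflexive polytope is canonical. -/
theorem almost_pseudoreflexive_canonical {d : ℕ} (P : Set (Fin d → ℝ))
    (hP : IsLatticePolytope P) (h0 : 0 ∈ interior P)
    (hapr : 0 ∈ interior (latticeHull (polarDual P))) :
    IsCanonical P := by
  exact almost_pseudoreflexive_canonical_general hapr
end

section
/- Up to unimodular equivalence (the action of GL(2,Z)), every terminal Fano polygon admitting a Mori fiber structure is one of ∇_{-∞} = Conv((1,0),(0,1),(-1,-1)), ∇_0 = Conv((1,0),(0,1),(-1,0),(0,-1)), or ∇_1 = Conv((1,0),(0,1),(-1,0),(-1,-1)). -/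
open Set

/-- The Fano polygon `∇_{-∞} = Conv(e₁, e₂, -e₁-e₂)`, corresponding to `ℙ²`. -/
def nablaInf : Set (Fin 2 → ℝ) :=
  convexHull ℝ ({![1,0], ![0,1], ![-1,-1]} : Set (Fin 2 → ℝ))

/-- The Fano polygon `∇_m = Conv(e₁, e₂, -e₁, -m·e₁-e₂)`, corresponding to `𝔽_m`. -/
def nabla (m : ℕ) : Set (Fin 2 → ℝ) :=
  convexHull ℝ ({![1,0], ![0,1], ![-1,0], ![-(m:ℝ),-1]} : Set (Fin 2 → ℝ))

/-- Primitivity of a point with respect to an abstract lattice `Λ`. -/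
def IsPrimitiveIn {W : Type*} [AddCommMonoid W] (Λ : Set W) (w : W) : Prop :=
  w ∈ Λ ∧ w ≠ 0 ∧ ∀ (n : ℕ) (u : W), u ∈ Λ → w = n • u → n = 1

/-- The set of primitive lattice points of a polygon. -/
def primPts (P : Set (Fin 2 → ℝ)) : Set (Fin 2 → ℝ) := {v | IsPrimitivePt v ∧ v ∈ P}

/-- A Mori fiber structure on (the primitive generating set of) a Fano polygon `P`:
a fiber structure `A_f ⊆ A = P ∩ N_prim` (i.e. `A_f` is nonempty, equals the
intersection of `A` with the linear span `L` of `A_f`, and generates `L` as a cone)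
which is irreducible (`|A| = |A_f| + |A_b|`, where the base `A_b` consists of the
primitive generators, with respect to the image lattice, of the rays spanned by the
images of `A \ A_f` in `ℝ² / L`) and satisfies `|A_f| = dim L + 1`. -/
def HasMoriFiberStructure (P : Set (Fin 2 → ℝ)) : Prop :=
  ∃ Af : Set (Fin 2 → ℝ), Af ⊆ primPts P ∧ Af.Nonempty ∧
    Af = {v ∈ primPts P | v ∈ Submodule.span ℝ Af} ∧
    (∀ x ∈ Submodule.span ℝ Af, ∃ s : Finset (Fin 2 → ℝ), (s : Set (Fin 2 → ℝ)) ⊆ Af ∧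
      ∃ c : (Fin 2 → ℝ) → ℝ, (∀ v, 0 ≤ c v) ∧ x = ∑ v ∈ s, c v • v) ∧
    Af.ncard = Module.finrank ℝ (Submodule.span ℝ Af) + 1 ∧
    (primPts P).ncard = Af.ncard +
      {w : (Fin 2 → ℝ) ⧸ Submodule.span ℝ Af |
        IsPrimitiveIn ((Submodule.span ℝ Af).mkQ '' {x | IsLatticePoint x}) w ∧
        ∃ v ∈ primPts P \ Af, ∃ t : ℝ, 0 < t ∧
          (Submodule.span ℝ Af).mkQ v = t • w}.ncard

/-!
Two vertices of a terminal polygon that are not proportional span, together with the origin, a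
lattice triangle without further lattice points; such a triangle is half of a fundamental
parallelogram, so the determinant of any two vertices is `0` or `±1`. By the Plücker relation
`[ab][cd] - [ac][bd] + [ad][bc] = 0` and parity, four vectors cannot have pairwise determinants
`±1`. Hence a terminal polygon without opposite vertices is a triangle, and it is `∇_{-∞}`.
If `v` and `-v` are both vertices, there are vertices `u`, `w` with `[vu] = 1` and `[vw] = -1`; when
there are no others, `w = [wu] v - u` with `[wu] ∈ {0, ±1}`, which gives `∇_0` or `∇_1`.

The Mori fiber structure matters only through the bound `|A| ≤ 4`. For `dim L = 1` the image of the
lattice in `ℝ² / L` is cyclic, so that it has at most two primitive elements and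
`|A| = |A_f| + |A_b| ≤ 2 + 2`; for `dim L = 2` the base is empty and `|A| = |A_f| = 3`.
-/

section PlaneDet

section CommRing

variable {R : Type*} [CommRing R]

/-- The determinant `[ab]` of two plane vectors, as a bilinear form, so that `planeDet a` is the
linear functional whose sign tells on which side of the line through `a` a vector lies. -/
def planeDet : (Fin 2 → R) →ₗ[R] (Fin 2 → R) →ₗ[R] R :=
  LinearMap.mk₂ R (fun a b => a 0 * b 1 - a 1 * b 0)
    (fun _ _ _ => by simp only [Pi.add_apply]; ring)
    (fun _ _ _ => by simp only [Pi.smul_apply, smul_eq_mul]; ring)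
    (fun _ _ _ => by simp only [Pi.add_apply]; ring)
    (fun _ _ _ => by simp only [Pi.smul_apply, smul_eq_mul]; ring)

theorem planeDet_apply (a b : Fin 2 → R) : planeDet a b = a 0 * b 1 - a 1 * b 0 := rfl

@[simp]
theorem planeDet_self (a : Fin 2 → R) : planeDet a a = 0 := by
  rw [planeDet_apply]; ring

theorem planeDet_swap (a b : Fin 2 → R) : planeDet b a = -planeDet a b := by
  simp only [planeDet_apply]; ring

theorem planeDet_eq_zero_iff {a : Fin 2 → R} : planeDet a = 0 ↔ a = 0 := by
  refine ⟨fun h => ?_, fun h => by rw [h, map_zero]⟩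
  have h₀ : planeDet a ![0, 1] = 0 := by rw [h, LinearMap.zero_apply]
  have h₁ : planeDet a ![1, 0] = 0 := by rw [h, LinearMap.zero_apply]
  ext i
  fin_cases i
  · simpa [planeDet_apply] using h₀
  · simpa [planeDet_apply] using h₁

theorem planeDet_cramer (a b x : Fin 2 → R) :
    planeDet a b • x = planeDet x b • a + planeDet a x • b := by
  refine funext (Fin.forall_fin_two.2 ⟨?_, ?_⟩) <;>
    simp only [planeDet_apply, Pi.add_apply, Pi.smul_apply, smul_eq_mul] <;> ring

theorem planeDet_pluecker (a b c d : Fin 2 → R) :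
    planeDet a b * planeDet c d - planeDet a c * planeDet b d +
      planeDet a d * planeDet b c = 0 := by
  simp only [planeDet_apply]; ring

end CommRing

theorem linearIndependent_pair_of_planeDet_ne_zero {R : Type*} [CommRing R] [NoZeroDivisors R]
    {a b : Fin 2 → R} (h : planeDet a b ≠ 0) : LinearIndependent R ![a, b] := by
  refine LinearIndependent.pair_iff.2 fun s t hst => ⟨?_, ?_⟩
  · simpa [h] using congr_arg (fun x => planeDet x b) hst
  · simpa [h] using congr_arg (planeDet a) hst

theorem eq_smul_add_smul_of_planeDet_ne_zero {K : Type*} [Field K] {a b : Fin 2 → K}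
    (h : planeDet a b ≠ 0) (x : Fin 2 → K) :
    x = (planeDet x b / planeDet a b) • a + (planeDet a x / planeDet a b) • b := by
  rw [div_eq_inv_mul, div_eq_inv_mul, mul_smul, mul_smul, ← smul_add, ← planeDet_cramer,
    inv_smul_smul₀ h]

theorem eq_triple_of_pairwise_abs_planeDet_eq_one {R : Type*} [CommRing R] [LinearOrder R]
    [IsStrictOrderedRing R] {S : Set (Fin 2 → R)}
    (hS : S.Pairwise fun x y => |planeDet x y| = 1) {a b c : Fin 2 → R} (ha : a ∈ S) (hb : b ∈ S)
    (hc : c ∈ S) (hab : a ≠ b) (hac : a ≠ c) (hbc : b ≠ c) : S = {a, b, c} := by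
  refine Subset.antisymm (fun d hd => ?_) (by simp [insert_subset_iff, *])
  by_contra hmem
  simp only [mem_insert_iff, mem_singleton_iff, not_or] at hmem
  obtain ⟨hda, hdb, hdc⟩ := hmem
  have abs_mul_eq_one {p q r s : Fin 2 → R} (h : |planeDet p q| = 1) (h' : |planeDet r s| = 1) :
      planeDet p q * planeDet r s = 1 ∨ planeDet p q * planeDet r s = -1 :=
    eq_or_eq_neg_of_abs_eq (by rw [abs_mul, h, h', one_mul])
  have hsum := planeDet_pluecker a b c d
  rcases abs_mul_eq_one (hS ha hb hab) (hS hc hd (Ne.symm hdc)) with h₁ | h₁ <;>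
  rcases abs_mul_eq_one (hS ha hc hac) (hS hb hd (Ne.symm hdb)) with h₂ | h₂ <;>
  rcases abs_mul_eq_one (hS ha hd (Ne.symm hda)) (hS hb hc hbc) with h₃ | h₃ <;>
  linarith

theorem eq_of_planeDet_eq_one_of_ncard_le_four {R : Type*} [CommRing R] [LinearOrder R]
    [IsStrictOrderedRing R] {S : Set (Fin 2 → R)} (hfin : S.Finite) (hcard : S.ncard ≤ 4)
    {v u w : Fin 2 → R} (hv : v ∈ S) (hu : u ∈ S) (hnv : -v ∈ S) (hw : w ∈ S)
    (hvu : planeDet v u = 1) (hvw : planeDet v w = -1) : S = {v, u, -v, w} := by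
  have hne_vu : v ≠ u := by rintro rfl; simp at hvu
  have hne_vn : v ≠ -v := by
    intro h
    have : planeDet v u = -planeDet v u := by rw [← LinearMap.neg_apply, ← map_neg, ← h]
    linarith
  have hne_vw : v ≠ w := by rintro rfl; simp at hvw
  have hne_un : u ≠ -v := by rintro rfl; simp at hvu
  have hne_uw : u ≠ w := by rintro rfl; linarith
  have hne_nw : -v ≠ w := by rintro rfl; simp at hvw
  have hfour : ({v, u, -v, w} : Set (Fin 2 → R)).ncard = 4 := by
    rw [ncard_insert_of_notMem (by simp [*]), ncard_insert_of_notMem (by simp [*]),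
      ncard_pair hne_nw]
  exact (eq_of_subset_of_ncard_le (by simp [insert_subset_iff, *]) (by lia) hfin).symm

end PlaneDet

section LatticeTriangle

variable {K E : Type*} [Field K] [LinearOrder K] [IsStrictOrderedRing K] [AddCommGroup E]
  [Module K E]

theorem smul_add_smul_mem_convexHull (a b : E) {s t : K} (hs : 0 ≤ s) (ht : 0 ≤ t)
    (hst : s + t ≤ 1) : s • a + t • b ∈ convexHull K {0, a, b} := by
  have h := (convex_convexHull K {0, a, b}).sum_mem (t := Finset.univ)
    (w := ![1 - s - t, s, t]) (z := ![0, a, b])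
    (by simp [Fin.forall_fin_succ, hs, ht, le_sub_iff_add_le', hst])
    (by simp [Fin.sum_univ_three, add_assoc])
    (by intro i _; apply subset_convexHull; fin_cases i <;> simp)
  simpa [Fin.sum_univ_three] using h

theorem coeffs_of_mem_empty_triangle {Λ : AddSubgroup E} {a b : E}
    (hab : LinearIndependent K ![a, b])
    (hempty : (Λ : Set E) ∩ convexHull K {0, a, b} ⊆ {0, a, b}) {s t : K} (hs : 0 ≤ s)
    (ht : 0 ≤ t) (hst : s + t ≤ 1) (h : s • a + t • b ∈ Λ) :
    (s = 0 ∧ t = 0) ∨ (s = 1 ∧ t = 0) ∨ (s = 0 ∧ t = 1) := by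
  rcases hempty ⟨h, smul_add_smul_mem_convexHull a b hs ht hst⟩ with h | h | h
  · exact .inl (hab.eq_of_pair (by simpa using h))
  · exact .inr (.inl (hab.eq_of_pair (by simpa using h)))
  · exact .inr (.inr (hab.eq_of_pair (by simpa using h)))

theorem exists_int_coeffs_of_empty_triangle [FloorRing K] {Λ : AddSubgroup E} {a b : E}
    (ha : a ∈ Λ) (hb : b ∈ Λ) (hab : LinearIndependent K ![a, b])
    (hempty : (Λ : Set E) ∩ convexHull K {0, a, b} ⊆ {0, a, b}) {s t : K}
    (h : s • a + t • b ∈ Λ) : ∃ m n : ℤ, s = m ∧ t = n := by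
  have hfract : Int.fract s • a + Int.fract t • b ∈ Λ := by
    have := Λ.sub_mem h (Λ.add_mem (Λ.zsmul_mem ha ⌊s⌋) (Λ.zsmul_mem hb ⌊t⌋))
    convert this using 1
    simp only [← Int.self_sub_floor, ← Int.cast_smul_eq_zsmul K]
    module
  have hs₀ := Int.fract_nonneg s
  have ht₀ := Int.fract_nonneg t
  have hs₁ := Int.fract_lt_one s
  have ht₁ := Int.fract_lt_one t
  suffices hzero : Int.fract s = 0 ∧ Int.fract t = 0 from
    ⟨⌊s⌋, ⌊t⌋, by rw [← Int.self_sub_fract, hzero.1, sub_zero],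
      by rw [← Int.self_sub_fract, hzero.2, sub_zero]⟩
  rcases le_or_gt (Int.fract s + Int.fract t) 1 with hle | hgt
  · rcases coeffs_of_mem_empty_triangle hab hempty hs₀ ht₀ hle hfract with h | h | h
    · exact h
    all_goals linarith
  · -- The half turn about `(a + b) / 2` carries the other half of the parallelogram to this one.
    have hturn : (1 - Int.fract s) • a + (1 - Int.fract t) • b ∈ Λ := by
      convert Λ.sub_mem (Λ.add_mem ha hb) hfract using 1
      module
    rcases coeffs_of_mem_empty_triangle hab hempty (by linarith) (by linarith) (by linarith)
      hturn with h | h | h <;> linarith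

end LatticeTriangle

section IntegerLattice

/-- The lattice `ℤ^d ⊆ ℝ^d`, as a subgroup. -/
def integerLattice (d : ℕ) : AddSubgroup (Fin d → ℝ) where
  carrier := {x | IsLatticePoint x}
  zero_mem' _ := ⟨0, by simp⟩
  add_mem' hx hy i := by
    obtain ⟨m, hm⟩ := hx i
    obtain ⟨n, hn⟩ := hy i
    exact ⟨m + n, by simp [hm, hn]⟩
  neg_mem' hx i := by
    obtain ⟨m, hm⟩ := hx i
    exact ⟨-m, by simp [hm]⟩

theorem IsLatticePoint.exists_eq_intCast {d : ℕ} {x : Fin d → ℝ} (hx : IsLatticePoint x) :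
    ∃ z : Fin d → ℤ, x = fun i => (z i : ℝ) := by
  choose z hz using hx
  exact ⟨z, funext hz⟩

theorem isLatticePoint_intCast {d : ℕ} (z : Fin d → ℤ) :
    IsLatticePoint fun i => (z i : ℝ) :=
  fun i => ⟨z i, rfl⟩

theorem IsLatticePoint.exists_planeDet_eq {a b : Fin 2 → ℝ} (ha : IsLatticePoint a)
    (hb : IsLatticePoint b) : ∃ n : ℤ, planeDet a b = n := by
  obtain ⟨z, rfl⟩ := ha.exists_eq_intCast
  obtain ⟨y, rfl⟩ := hb.exists_eq_intCast
  exact ⟨planeDet z y, by simp [planeDet_apply]⟩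

theorem IsPrimitivePt.exists_planeDet_eq_one {v : Fin 2 → ℝ} (hv : IsPrimitivePt v) :
    ∃ u, IsLatticePoint u ∧ planeDet v u = 1 := by
  obtain ⟨hlat, -, hprim⟩ := hv
  obtain ⟨z, rfl⟩ := hlat.exists_eq_intCast
  have hgcd : Int.gcd (z 0) (z 1) = 1 := by
    refine hprim _ _ (isLatticePoint_intCast fun i => z i / Int.gcd (z 0) (z 1))
      (funext fun i => ?_)
    have hdvd : (Int.gcd (z 0) (z 1) : ℤ) ∣ z i := by
      fin_cases i
      exacts [Int.gcd_dvd_left .., Int.gcd_dvd_right ..]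
    rw [Pi.smul_apply, nsmul_eq_mul]
    exact_mod_cast (Int.mul_ediv_cancel' hdvd).symm
  obtain ⟨p, q, hpq⟩ := Int.isCoprime_iff_gcd_eq_one.2 hgcd
  refine ⟨_, isLatticePoint_intCast ![-q, p], ?_⟩
  rw [planeDet_apply]
  simp only [Matrix.cons_val_zero, Matrix.cons_val_one, Int.cast_neg]
  have : (p : ℝ) * z 0 + q * z 1 = 1 := by exact_mod_cast hpq
  linarith

theorem abs_planeDet_eq_one_of_empty_triangle {a b : Fin 2 → ℝ} (ha : IsLatticePoint a)
    (hb : IsLatticePoint b) (hab : planeDet a b ≠ 0)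
    (hempty : (integerLattice 2 : Set (Fin 2 → ℝ)) ∩ convexHull ℝ {0, a, b} ⊆ {0, a, b}) :
    |planeDet a b| = 1 := by
  have hcoeffs (z : Fin 2 → ℤ) : ∃ m n : ℤ, (fun i => (z i : ℝ)) = (m : ℝ) • a + (n : ℝ) • b := by
    have hz := eq_smul_add_smul_of_planeDet_ne_zero hab fun i => (z i : ℝ)
    obtain ⟨m, n, hm, hn⟩ := exists_int_coeffs_of_empty_triangle (Λ := integerLattice 2) ha hb
      (linearIndependent_pair_of_planeDet_ne_zero hab) hempty (hz ▸ isLatticePoint_intCast z)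
    exact ⟨m, n, hm ▸ hn ▸ hz⟩
  obtain ⟨m, n, h₁⟩ := hcoeffs ![1, 0]
  obtain ⟨p, q, h₂⟩ := hcoeffs ![0, 1]
  obtain ⟨D, hD⟩ := ha.exists_planeDet_eq hb
  have hmul : ((m * q - n * p : ℤ) : ℝ) * D = 1 := calc
    _ = planeDet ((m : ℝ) • a + (n : ℝ) • b) ((p : ℝ) • a + (q : ℝ) • b) := by
      simp only [map_add, map_smul, LinearMap.add_apply, LinearMap.smul_apply, planeDet_self,
        planeDet_swap a b, hD, smul_eq_mul]
      push_cast
      ring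
    _ = 1 := by rw [← h₁, ← h₂]; simp [planeDet_apply]
  have hunit : IsUnit D := IsUnit.of_mul_eq_one_right _ (by exact_mod_cast hmul)
  rw [hD]
  exact_mod_cast Int.isUnit_iff_abs_eq.1 hunit

end IntegerLattice

section UnimodularEquiv

/-- Unimodular equivalence: some element of `GL(d, ℤ)` carries `P` onto `Q`. -/
def IsUnimodularEquiv {d : ℕ} (P Q : Set (Fin d → ℝ)) : Prop :=
  ∃ g : Matrix (Fin d) (Fin d) ℤ, IsUnit g.det ∧
    (fun x => (g.map (Int.cast : ℤ → ℝ)).mulVec x) '' P = Q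

theorem IsUnimodularEquiv.symm {d : ℕ} {P Q : Set (Fin d → ℝ)} (h : IsUnimodularEquiv P Q) :
    IsUnimodularEquiv Q P := by
  obtain ⟨g, hg, rfl⟩ := h
  refine ⟨g⁻¹, g.isUnit_nonsing_inv_det hg, ?_⟩
  have hinv : g⁻¹.map (Int.cast : ℤ → ℝ) * g.map (Int.cast : ℤ → ℝ) = 1 := by
    simpa [g.nonsing_inv_mul hg] using (g⁻¹.map_mul (M := g) (f := Int.castRingHom ℝ)).symm
  simp only [image_image, Matrix.mulVec_mulVec, hinv, Matrix.one_mulVec, image_id']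

variable {a b : Fin 2 → ℝ}

theorem isUnimodularEquiv_convexHull_image (ha : IsLatticePoint a) (hb : IsLatticePoint b)
    (hab : |planeDet a b| = 1) (S : Set (Fin 2 → ℝ)) :
    IsUnimodularEquiv (convexHull ℝ ((fun c => c 0 • a + c 1 • b) '' S)) (convexHull ℝ S) := by
  obtain ⟨z, rfl⟩ := ha.exists_eq_intCast
  obtain ⟨y, rfl⟩ := hb.exists_eq_intCast
  refine IsUnimodularEquiv.symm ⟨!![z 0, y 0; z 1, y 1], ?_, ?_⟩
  · rw [Int.isUnit_iff_abs_eq, Matrix.det_fin_two_of]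
    rw [planeDet_apply] at hab
    rw [mul_comm (y 0)]
    exact_mod_cast hab
  · rw [← Matrix.coe_mulVecLin, LinearMap.image_convexHull]
    congr 2 with c : 1
    exact funext (Fin.forall_fin_two.2 ⟨by simp [mul_comm], by simp [mul_comm]⟩)

theorem isUnimodularEquiv_convexHull_nablaInf (ha : IsLatticePoint a) (hb : IsLatticePoint b)
    (hab : |planeDet a b| = 1) : IsUnimodularEquiv (convexHull ℝ {a, b, -a - b}) nablaInf := by
  have h := isUnimodularEquiv_convexHull_image ha hb hab {![1, 0], ![0, 1], ![-1, -1]}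
  simpa [nablaInf, image_insert_eq, ← sub_eq_add_neg] using h

theorem isUnimodularEquiv_convexHull_nabla (ha : IsLatticePoint a) (hb : IsLatticePoint b)
    (hab : |planeDet a b| = 1) (m : ℕ) :
    IsUnimodularEquiv (convexHull ℝ {a, b, -a, -(m : ℝ) • a - b}) (nabla m) := by
  have h := isUnimodularEquiv_convexHull_image ha hb hab
    {![1, 0], ![0, 1], ![-1, 0], ![-(m : ℝ), -1]}
  simpa [nabla, image_insert_eq, ← sub_eq_add_neg] using h

end UnimodularEquiv

section TerminalPolygon

theorem exists_pos_of_zero_mem_interior_convexHull {E : Type*} [AddCommGroup E] [Module ℝ E]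
    [TopologicalSpace E] [ContinuousSMul ℝ E] {V : Set E} (h₀ : 0 ∈ interior (convexHull ℝ V))
    {f : E →ₗ[ℝ] ℝ} (hf : f ≠ 0) : ∃ v ∈ V, 0 < f v := by
  by_contra! hneg
  have hle : ∀ x ∈ convexHull ℝ V, f x ≤ 0 :=
    convexHull_min hneg (convex_halfSpace_le f.isLinear 0)
  have hnonpos (x : E) : f x ≤ 0 := by
    have hlim : Filter.Tendsto (fun t : ℝ => t • x) (nhdsWithin 0 (Ioi 0)) (nhds 0) := by
      have hcont : Continuous fun t : ℝ => t • x := by fun_prop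
      simpa using (hcont.tendsto 0).mono_left nhdsWithin_le_nhds
    obtain ⟨t, ht, htpos⟩ :=
      ((hlim.eventually (mem_interior_iff_mem_nhds.1 h₀)).and self_mem_nhdsWithin).exists
    have := hle _ ht
    rw [map_smul, smul_eq_mul] at this
    exact nonpos_of_mul_nonpos_right this htpos
  refine hf (LinearMap.ext fun x => le_antisymm (hnonpos x) ?_)
  simpa using hnonpos (-x)

theorem IsLatticePolytope.finite_extremePoints {d : ℕ} {P : Set (Fin d → ℝ)}
    (hP : IsLatticePolytope P) : (extremePoints ℝ P).Finite := by
  obtain ⟨S, -, rfl⟩ := hP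
  exact S.finite_toSet.subset extremePoints_convexHull_subset

theorem IsLatticePolytope.convex {d : ℕ} {P : Set (Fin d → ℝ)} (hP : IsLatticePolytope P) :
    Convex ℝ P := by
  obtain ⟨S, -, rfl⟩ := hP
  exact convex_convexHull ℝ _

theorem IsLatticePolytope.convexHull_extremePoints {d : ℕ} {P : Set (Fin d → ℝ)}
    (hP : IsLatticePolytope P) : convexHull ℝ (extremePoints ℝ P) = P := by
  have hcompact : IsCompact P := by
    obtain ⟨S, -, rfl⟩ := hP
    exact S.finite_toSet.isCompact_convexHull ℝ
  rw [← (hP.finite_extremePoints.isClosed_convexHull ℝ).closure_eq]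
  exact closure_convexHull_extremePoints hcompact hP.convex

theorem IsFanoPolytope.nonempty_extremePoints {d : ℕ} {P : Set (Fin d → ℝ)}
    (hFano : IsFanoPolytope P) : (extremePoints ℝ P).Nonempty := by
  have h : (convexHull ℝ (extremePoints ℝ P)).Nonempty := by
    rw [hFano.1.convexHull_extremePoints]
    exact ⟨0, interior_subset hFano.2.1⟩
  exact convexHull_nonempty_iff.1 h

theorem IsFanoPolytope.exists_extremePoints_pos {d : ℕ} {P : Set (Fin d → ℝ)}
    (hFano : IsFanoPolytope P) {f : (Fin d → ℝ) →ₗ[ℝ] ℝ} (hf : f ≠ 0) :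
    ∃ v ∈ extremePoints ℝ P, 0 < f v :=
  exists_pos_of_zero_mem_interior_convexHull
    (hFano.1.convexHull_extremePoints.symm ▸ hFano.2.1) hf

theorem IsTerminal.integerLattice_inter_convexHull_subset {d : ℕ} {P : Set (Fin d → ℝ)}
    (hTerm : IsTerminal P) (hconv : Convex ℝ P) {S : Set (Fin d → ℝ)}
    (hS : S ⊆ extremePoints ℝ P) :
    (integerLattice d : Set (Fin d → ℝ)) ∩ convexHull ℝ (insert 0 S) ⊆ insert 0 S := by
  rintro x ⟨hlat, hx⟩
  have h₀ : (0 : Fin d → ℝ) ∈ {x ∈ P | IsLatticePoint x} := hTerm ▸ .inr rfl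
  have hP : convexHull ℝ (insert 0 S) ⊆ P :=
    convexHull_min (insert_subset h₀.1 fun y hy => (hS hy).1) hconv
  have hx' : x ∈ extremePoints ℝ P ∪ {0} := hTerm ▸ ⟨hP hx, hlat⟩
  rcases hx' with hext | rfl
  · exact extremePoints_convexHull_subset
      (inter_extremePoints_subset_extremePoints_of_subset hP ⟨hx, hext⟩)
  · exact mem_insert ..

theorem IsTerminal.primPts_eq_extremePoints {P : Set (Fin 2 → ℝ)} (hTerm : IsTerminal P)
    (hFano : IsFanoPolytope P) : primPts P = extremePoints ℝ P := by
  refine Subset.antisymm ?_ fun v hv => ⟨hFano.2.2 v hv, hv.1⟩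
  rintro v ⟨⟨hlat, hne, -⟩, hv⟩
  have hv' : v ∈ extremePoints ℝ P ∪ {0} := hTerm ▸ ⟨hv, hlat⟩
  exact hv'.resolve_right hne

variable {P : Set (Fin 2 → ℝ)} {a b : Fin 2 → ℝ}

theorem IsTerminal.abs_planeDet_eq_one (hTerm : IsTerminal P) (hFano : IsFanoPolytope P)
    (ha : a ∈ extremePoints ℝ P) (hb : b ∈ extremePoints ℝ P) (hab : planeDet a b ≠ 0) :
    |planeDet a b| = 1 :=
  abs_planeDet_eq_one_of_empty_triangle (hFano.2.2 a ha).1 (hFano.2.2 b hb).1 hab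
    (hTerm.integerLattice_inter_convexHull_subset hFano.1.convex (by simp [insert_subset_iff, *]))

theorem IsTerminal.exists_planeDet_eq_one (hTerm : IsTerminal P) (hFano : IsFanoPolytope P)
    (ha : a ∈ extremePoints ℝ P) : ∃ u ∈ extremePoints ℝ P, planeDet a u = 1 := by
  obtain ⟨u, hu, hpos⟩ :=
    hFano.exists_extremePoints_pos (planeDet_eq_zero_iff.not.2 (hFano.2.2 a ha).2.1)
  exact ⟨u, hu, abs_of_pos hpos ▸ hTerm.abs_planeDet_eq_one hFano ha hu hpos.ne'⟩

theorem IsTerminal.exists_planeDet_eq_neg_one (hTerm : IsTerminal P) (hFano : IsFanoPolytope P)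
    (ha : a ∈ extremePoints ℝ P) : ∃ w ∈ extremePoints ℝ P, planeDet a w = -1 := by
  obtain ⟨w, hw, hpos⟩ := hFano.exists_extremePoints_pos
    (neg_ne_zero.2 (planeDet_eq_zero_iff.not.2 (hFano.2.2 a ha).2.1))
  have hneg : planeDet a w < 0 := neg_pos.1 hpos
  have habs := hTerm.abs_planeDet_eq_one hFano ha hw hneg.ne
  rw [abs_of_neg hneg] at habs
  exact ⟨w, hw, neg_eq_iff_eq_neg.1 habs⟩

theorem IsTerminal.eq_neg_of_planeDet_eq_zero (hTerm : IsTerminal P) (hFano : IsFanoPolytope P)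
    (ha : a ∈ extremePoints ℝ P) (hb : b ∈ extremePoints ℝ P) (hne : a ≠ b)
    (hab : planeDet a b = 0) : b = -a := by
  obtain ⟨u, hu, hau⟩ := hTerm.exists_planeDet_eq_one hFano ha
  have hb_eq : b = planeDet b u • a := by simpa [hau, hab] using planeDet_cramer a u b
  have hbu : planeDet b u ≠ 0 := fun h => (hFano.2.2 b hb).2.1 (by rw [hb_eq, h, zero_smul])
  rcases eq_or_eq_neg_of_abs_eq (hTerm.abs_planeDet_eq_one hFano hb hu hbu) with h | h
  · exact absurd (by rw [hb_eq, h, one_smul]) hne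
  · rw [hb_eq, h, neg_one_smul]

theorem IsTerminal.isUnimodularEquiv_nablaInf_of_neg_notMem (hTerm : IsTerminal P)
    (hFano : IsFanoPolytope P)
    (hopp : ∀ v ∈ extremePoints ℝ P, -v ∉ extremePoints ℝ P) : IsUnimodularEquiv P nablaInf := by
  have hpair : (extremePoints ℝ P).Pairwise fun x y => |planeDet x y| = 1 := by
    refine fun x hx y hy hxy => hTerm.abs_planeDet_eq_one hFano hx hy fun h => hopp x hx ?_
    exact hTerm.eq_neg_of_planeDet_eq_zero hFano hx hy hxy h ▸ hy
  obtain ⟨a, ha⟩ := hFano.nonempty_extremePoints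
  obtain ⟨u, hu, hau⟩ := hTerm.exists_planeDet_eq_one hFano ha
  obtain ⟨w, hw, haw⟩ := hTerm.exists_planeDet_eq_neg_one hFano ha
  have hne_au : a ≠ u := by rintro rfl; simp at hau
  have hne_aw : a ≠ w := by rintro rfl; simp at haw
  have hne_uw : u ≠ w := by rintro rfl; linarith
  have hV : extremePoints ℝ P = {a, u, w} :=
    eq_triple_of_pairwise_abs_planeDet_eq_one hpair ha hu hw hne_au hne_aw hne_uw
  have huw : planeDet u w = 1 := by
    obtain ⟨x, hx, hux⟩ := hTerm.exists_planeDet_eq_one hFano hu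
    rw [hV] at hx
    rcases hx with rfl | rfl | rfl
    · rw [planeDet_swap, hau] at hux; linarith
    · simp at hux
    · exact hux
  have hw_eq : w = -a - u := by
    simpa [hau, haw, planeDet_swap u w, huw, ← sub_eq_add_neg] using planeDet_cramer a u w
  rw [← hFano.1.convexHull_extremePoints, hV, hw_eq]
  exact isUnimodularEquiv_convexHull_nablaInf (hFano.2.2 a ha).1 (hFano.2.2 u hu).1 (by simp [hau])

theorem IsTerminal.isUnimodularEquiv_nabla_of_neg_mem (hTerm : IsTerminal P)
    (hFano : IsFanoPolytope P) {v : Fin 2 → ℝ} (hv : v ∈ extremePoints ℝ P)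
    (hnv : -v ∈ extremePoints ℝ P) (hcard : (extremePoints ℝ P).ncard ≤ 4) :
    IsUnimodularEquiv P (nabla 0) ∨ IsUnimodularEquiv P (nabla 1) := by
  obtain ⟨u, hu, hvu⟩ := hTerm.exists_planeDet_eq_one hFano hv
  obtain ⟨w, hw, hvw⟩ := hTerm.exists_planeDet_eq_neg_one hFano hv
  have hV : extremePoints ℝ P = {v, u, -v, w} :=
    eq_of_planeDet_eq_one_of_ncard_le_four hFano.1.finite_extremePoints hcard hv hu hnv hw hvu hvw
  have hw_eq : w = planeDet w u • v - u := by
    simpa [hvu, hvw, ← sub_eq_add_neg] using planeDet_cramer v u w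
  have hvlat := (hFano.2.2 v hv).1
  have hulat := (hFano.2.2 u hu).1
  rw [← hFano.1.convexHull_extremePoints, hV]
  by_cases hwu : planeDet w u = 0
  · left
    rw [hwu] at hw_eq
    simpa [hw_eq] using isUnimodularEquiv_convexHull_nabla hvlat hulat (by simp [hvu]) 0
  right
  rcases eq_or_eq_neg_of_abs_eq (hTerm.abs_planeDet_eq_one hFano hw hu hwu) with h | h <;>
    rw [h] at hw_eq
  · have hswap : ({v, u, -v, w} : Set (Fin 2 → ℝ)) = {-v, u, - -v, w} := by
      rw [neg_neg]; grind
    rw [hswap]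
    simpa [hw_eq] using
      isUnimodularEquiv_convexHull_nabla ((integerLattice 2).neg_mem hvlat) hulat (by simp [hvu]) 1
  · simpa [hw_eq] using isUnimodularEquiv_convexHull_nabla hvlat hulat (by simp [hvu]) 1

end TerminalPolygon

section MoriFiberStructure

theorem IsPrimitiveIn.eq_or_eq_neg_of_zmultiples {W : Type*} [AddCommGroup W] {u w : W}
    (h : IsPrimitiveIn (AddSubgroup.zmultiples u : Set W) w) : w = u ∨ w = -u := by
  obtain ⟨⟨n, rfl⟩, -, hprim⟩ := h
  dsimp only at hprim ⊢
  rcases n.natAbs_eq with hn | hn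
  · have h₁ := hprim n.natAbs u (AddSubgroup.mem_zmultiples u) (by rw [← natCast_zsmul, ← hn])
    left
    rw [hn, h₁, Nat.cast_one, one_zsmul]
  · have h₁ := hprim n.natAbs (-u) (neg_mem (AddSubgroup.mem_zmultiples u))
      (by rw [← natCast_zsmul, zsmul_neg, ← neg_zsmul, ← hn])
    right
    rw [hn, h₁, Nat.cast_one, neg_zsmul, one_zsmul]

theorem image_mkQ_eq_zmultiples {L : Submodule ℝ (Fin 2 → ℝ)} {v u : Fin 2 → ℝ} (hvL : v ∈ L)
    (hv : IsLatticePoint v) (hu : IsLatticePoint u) (hvu : planeDet v u = 1) :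
    L.mkQ '' {x | IsLatticePoint x} = AddSubgroup.zmultiples (L.mkQ u) := by
  have hmkv : L.mkQ v = 0 := (Submodule.Quotient.mk_eq_zero L).2 hvL
  ext w
  constructor
  · rintro ⟨x, hx, rfl⟩
    obtain ⟨n, hn⟩ := hv.exists_planeDet_eq hx
    have hx_eq : x = planeDet x u • v + (n : ℝ) • u := by
      simpa [hvu, hn] using planeDet_cramer v u x
    refine ⟨n, ?_⟩
    rw [hx_eq, map_add, map_smul, map_smul, hmkv, smul_zero, zero_add, Int.cast_smul_eq_zsmul]
  · rintro ⟨n, rfl⟩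
    exact ⟨n • u, (integerLattice 2).zsmul_mem hu n, map_zsmul ..⟩

theorem ncard_le_two_of_forall_isPrimitiveIn {L : Submodule ℝ (Fin 2 → ℝ)} {v : Fin 2 → ℝ}
    (hv : IsPrimitivePt v) (hvL : v ∈ L) {B : Set ((Fin 2 → ℝ) ⧸ L)}
    (hB : ∀ w ∈ B, IsPrimitiveIn (L.mkQ '' {x | IsLatticePoint x}) w) : B.ncard ≤ 2 := by
  obtain ⟨u, hu, hvu⟩ := hv.exists_planeDet_eq_one
  rw [image_mkQ_eq_zmultiples hvL hv.1 hu hvu] at hB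
  calc B.ncard ≤ ({L.mkQ u, -L.mkQ u} : Set _).ncard :=
        ncard_le_ncard fun w hw => (hB w hw).eq_or_eq_neg_of_zmultiples
    _ ≤ 2 := (ncard_insert_le ..).trans (by rw [ncard_singleton])

theorem HasMoriFiberStructure.ncard_primPts_le_four {P : Set (Fin 2 → ℝ)}
    (h : HasMoriFiberStructure P) : (primPts P).ncard ≤ 4 := by
  obtain ⟨Af, hsub, ⟨v, hv⟩, -, -, hfiber, hirr⟩ := h
  rw [hirr, hfiber]
  have hrank : Module.finrank ℝ (Submodule.span ℝ Af) ≤ 2 := by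
    simpa using Submodule.finrank_le (Submodule.span ℝ Af)
  rcases hrank.lt_or_eq with hlt | heq
  · exact Nat.add_le_add (Nat.succ_le_of_lt hlt) <|
      ncard_le_two_of_forall_isPrimitiveIn (hsub hv).1 (Submodule.subset_span hv) fun w hw => hw.1
  · have htop : Submodule.span ℝ Af = ⊤ := Submodule.eq_top_of_finrank_eq (by simpa using heq)
    have := Submodule.Quotient.subsingleton_iff.2 htop
    rw [heq, (ncard_eq_zero (toFinite _)).2 (eq_empty_of_forall_notMem fun w hw =>
      hw.1.2.1 (Subsingleton.elim w 0))]
    norm_num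

end MoriFiberStructure

theorem terminal_mori_fiber_classification_general {P : Set (Fin 2 → ℝ)} (hFano : IsFanoPolytope P)
    (hTerm : IsTerminal P) (hcard : (extremePoints ℝ P).ncard ≤ 4) :
    ∃ g : Matrix (Fin 2) (Fin 2) ℤ, IsUnit g.det ∧
      ((fun x => (g.map (Int.cast : ℤ → ℝ)).mulVec x) '' P = nablaInf ∨
       (fun x => (g.map (Int.cast : ℤ → ℝ)).mulVec x) '' P = nabla 0 ∨
       (fun x => (g.map (Int.cast : ℤ → ℝ)).mulVec x) '' P = nabla 1) := by
  suffices h : IsUnimodularEquiv P nablaInf ∨ IsUnimodularEquiv P (nabla 0) ∨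
      IsUnimodularEquiv P (nabla 1) by
    simpa only [IsUnimodularEquiv, ← exists_or, ← and_or_left] using h
  by_cases hopp : ∃ v ∈ extremePoints ℝ P, -v ∈ extremePoints ℝ P
  · obtain ⟨v, hv, hnv⟩ := hopp
    exact .inr (hTerm.isUnimodularEquiv_nabla_of_neg_mem hFano hv hnv hcard)
  · push Not at hopp
    exact .inl (hTerm.isUnimodularEquiv_nablaInf_of_neg_notMem hFano hopp)

/-- Up to the action of `GL(2,ℤ)`, every terminal Fano polygon admitting
a Mori fiber structure is one of `∇_{-∞}`, `∇_0`, `∇_1`. -/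
theorem terminal_mori_fiber_classification (P : Set (Fin 2 → ℝ))
    (hFano : IsFanoPolytope P) (hTerm : IsTerminal P)
    (hMfs : HasMoriFiberStructure P) :
    ∃ g : Matrix (Fin 2) (Fin 2) ℤ, IsUnit g.det ∧
      ((fun x => (g.map (Int.cast : ℤ → ℝ)).mulVec x) '' P = nablaInf ∨
       (fun x => (g.map (Int.cast : ℤ → ℝ)).mulVec x) '' P = nabla 0 ∨
       (fun x => (g.map (Int.cast : ℤ → ℝ)).mulVec x) '' P = nabla 1) :=
  terminal_mori_fiber_classification_general hFano hTerm
    (hTerm.primPts_eq_extremePoints hFano ▸ hMfs.ncard_primPts_le_four)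
end
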